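/- Second duplication relation for cyclotomic harmonic sums: let m ≥ 1, let a_1,…,a_m and c_1,…,c_m be positive integers, b_1,…,b_m nonnegative integers, and n ∈ ℕ. Then Σ_{(σ_1,…,σ_m) ∈ {−1,1}^m} σ_1 σ_2 ⋯ σ_m · S_{(a_1,b_1,σ_1 c_1),…,(a_m,b_m,σ_m c_m)}(2n) = 2^m · S_{(2a_1, b_1 − a_1, c_1),…,(2a_m, b_m − a_m, c_m)}(n); note that 2a_i + (b_i − a_i) = a_i + b_i > 0, so the sums on the right are well defined. -/

import Mathlib

/-- Cyclotomic harmonic sums: `cycH [(a₁,b₁,c₁),…] n` is `S_{(a₁,b₁,c₁),…}(n)`;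
the empty sum equals `1`. -/
noncomputable def cycH : List (ℕ × ℤ × ℤ) → ℕ → ℝ
  | [], _ => 1
  | (a, b, c) :: t, n =>
      ∑ i ∈ Finset.Icc 1 n,
        ((c.sign : ℝ)) ^ i / ((a : ℝ) * i + (b : ℝ)) ^ c.natAbs * cycH t i

/-!
A cyclotomic harmonic sum is a nested partial sum that is multilinear in its weight functions.
Summing over the signs therefore replaces each weight `u k` by `u k - (-1) ^ k * u k`, which is `0`
at even `k` and `2 * u k` at odd `k`. Only odd indices `k = 2 * j - 1` survive in every layer,
and `a * (2 * j - 1) + b = (2 * a) * j + (b - a)`.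
-/

open Finset

/-- The operator sending a sequence `f` to its partial sums `n ↦ f 1 + ⋯ + f n`, as a linear map. -/
def partialSum (R : Type*) [CommSemiring R] : (ℕ → R) →ₗ[R] (ℕ → R) :=
  LinearMap.pi fun n ↦ ∑ i ∈ Icc 1 n, LinearMap.proj i

theorem partialSum_apply {R : Type*} [CommSemiring R] (f : ℕ → R) (n : ℕ) :
    partialSum R f n = ∑ i ∈ Icc 1 n, f i := by
  simp [partialSum]

theorem sum_Icc_eq_sum_Icc_half_of_even_eq_zero {M : Type*} [AddCommMonoid M] {f g : ℕ → M}
    (h_even : ∀ j, f (2 * j) = 0) (h_odd : ∀ j, f (2 * j + 1) = g (j + 1)) (N : ℕ) :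
    ∑ i ∈ Icc 1 N, f i = ∑ j ∈ Icc 1 ((N + 1) / 2), g j := by
  induction N with
  | zero => simp
  | succ N ih =>
    rw [sum_Icc_succ_top (by lia), ih]
    obtain ⟨k, rfl | rfl⟩ := N.even_or_odd'
    · rw [h_odd, show (2 * k + 1 + 1) / 2 = k + 1 by lia, show (2 * k + 1) / 2 = k by lia,
        sum_Icc_succ_top (by lia)]
    · rw [show 2 * k + 1 + 1 = 2 * (k + 1) by ring, h_even, add_zero,
        show (2 * (k + 1) + 1) / 2 = 2 * (k + 1) / 2 by lia]

/-- The nested sum `n ↦ ∑ f₁(i₁) ⋯ fₘ(iₘ)` over `n ≥ i₁ ≥ ⋯ ≥ iₘ ≥ 1`, as a multilinear map in the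
weights `f₁, …, fₘ`; it separates the multilinearity of `cycH` from the shape of its weights. -/
def nestedSum (R : Type*) [CommSemiring R] :
    (m : ℕ) → MultilinearMap R (fun _ : Fin m ↦ ℕ → R) (ℕ → R)
  | 0 => MultilinearMap.constOfIsEmpty R _ 1
  | m + 1 => LinearMap.uncurryLeft
      { toFun f := (partialSum R ∘ₗ LinearMap.mulLeft R f).compMultilinearMap (nestedSum R m)
        map_add' f g := by ext; simp [add_mul]
        map_smul' r f := by ext; simp }

theorem nestedSum_zero {R : Type*} [CommSemiring R] (f : Fin 0 → ℕ → R) (n : ℕ) :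
    nestedSum R 0 f n = 1 :=
  rfl

theorem nestedSum_succ {R : Type*} [CommSemiring R] {m : ℕ} (f : Fin (m + 1) → ℕ → R) (n : ℕ) :
    nestedSum R (m + 1) f n = ∑ i ∈ Icc 1 n, f 0 i * nestedSum R m (fun k ↦ f k.succ) i :=
  partialSum_apply _ n

theorem nestedSum_eq_nestedSum_half_of_even_eq_zero {R : Type*} [CommSemiring R] {m : ℕ}
    {f g : Fin m → ℕ → R} (h_even : ∀ i j, f i (2 * j) = 0)
    (h_odd : ∀ i j, f i (2 * j + 1) = g i (j + 1)) (N : ℕ) :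
    nestedSum R m f N = nestedSum R m g ((N + 1) / 2) := by
  induction m generalizing N with
  | zero => simp only [nestedSum_zero]
  | succ m ih =>
    simp only [nestedSum_succ]
    refine sum_Icc_eq_sum_Icc_half_of_even_eq_zero (fun j ↦ ?_) (fun j ↦ ?_) N
    · rw [h_even, zero_mul]
    · rw [h_odd, ih (fun i ↦ h_even i.succ) (fun i ↦ h_odd i.succ),
        show (2 * j + 1 + 1) / 2 = j + 1 by lia]

theorem sum_prod_mul_nestedSum {R ι : Type*} [CommSemiring R] [Fintype ι] {m : ℕ} (ε : ι → R)
    (f : Fin m → ι → ℕ → R) (N : ℕ) :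
    ∑ σ : Fin m → ι, (∏ i, ε (σ i)) * nestedSum R m (fun i ↦ f i (σ i)) N =
      nestedSum R m (fun i ↦ ∑ s, ε s • f i s) N := by
  simp only [MultilinearMap.map_sum, MultilinearMap.map_smul_univ, Finset.sum_apply, Pi.smul_apply,
    smul_eq_mul]

theorem nestedSum_duplication {R : Type*} [CommRing R] {m : ℕ} {u v : Fin m → ℕ → R}
    (huv : ∀ i j, u i (2 * j + 1) = v i (j + 1)) (N : ℕ) :
    ∑ σ : Fin m → Bool, (∏ i, if σ i then (1 : R) else -1) *
        nestedSum R m (fun i k ↦ (if σ i then 1 else -1) ^ k * u i k) N =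
      2 ^ m * nestedSum R m v ((N + 1) / 2) := by
  let ε : Bool → R := fun s ↦ if s then 1 else -1
  calc
    _ = nestedSum R m (fun i ↦ ∑ s, ε s • fun k ↦ ε s ^ k * u i k) N :=
      sum_prod_mul_nestedSum ε (fun i s k ↦ ε s ^ k * u i k) N
    _ = nestedSum R m (fun i ↦ (2 : R) • v i) ((N + 1) / 2) := by
      refine nestedSum_eq_nestedSum_half_of_even_eq_zero (fun i j ↦ ?_) (fun i j ↦ ?_) N
      · simp [ε]
      · simp [ε, pow_succ, huv, two_mul (v i (j + 1))]
    _ = 2 ^ m * nestedSum R m v ((N + 1) / 2) := by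
      simp [MultilinearMap.map_smul_univ]

/-- The summand `sgn(c)ⁱ / (a i + b)^|c|` contributed to `cycH` by the index triple `(a, b, c)`. -/
noncomputable def cycWeight (a : ℕ) (b c : ℤ) (i : ℕ) : ℝ :=
  (c.sign : ℝ) ^ i / ((a : ℝ) * i + b) ^ c.natAbs

theorem cycWeight_neg (a : ℕ) (b c : ℤ) (i : ℕ) :
    cycWeight a b (-c) i = (-1) ^ i * cycWeight a b c i := by
  rw [cycWeight, cycWeight, Int.sign_neg, Int.natAbs_neg, Int.cast_neg, neg_pow, mul_div_assoc]

theorem cycWeight_two_mul_add_one (a : ℕ) (b : ℤ) {c : ℤ} (hc : 0 < c) (j : ℕ) :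
    cycWeight a b c (2 * j + 1) = cycWeight (2 * a) (b - a) c (j + 1) := by
  have h_denom : (a : ℝ) * (2 * j + 1 : ℕ) + b =
      (2 * a : ℕ) * (j + 1 : ℕ) + (b - a : ℤ) := by
    push_cast
    ring
  simp only [cycWeight, Int.sign_eq_one_of_pos hc, Int.cast_one, one_pow, h_denom]

theorem cycH_ofFn {m : ℕ} (a : Fin m → ℕ) (b c : Fin m → ℤ) (n : ℕ) :
    cycH (List.ofFn fun i ↦ (a i, b i, c i)) n =
      nestedSum ℝ m (fun i ↦ cycWeight (a i) (b i) (c i)) n := by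
  induction m generalizing n with
  | zero => simp [cycH, nestedSum_zero]
  | succ m ih => simp only [List.ofFn_succ, cycH, nestedSum_succ, ih, cycWeight]

theorem cycH_duplication_second_general {m : ℕ} (a c : Fin m → ℕ) (b : Fin m → ℤ) (N : ℕ)
    (hab : ∀ i, 0 < a i + b i) (hc : ∀ i, 0 < c i) :
    ∑ σ : Fin m → Bool, (∏ i, if σ i then (1 : ℝ) else -1) *
        cycH (List.ofFn fun i ↦ (a i, b i, (if σ i then 1 else -1) * (c i : ℤ))) N =
      2 ^ m * cycH (List.ofFn fun i ↦ (2 * a i, b i - a i, (c i : ℤ))) ((N + 1) / 2) := by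
  have h_sign (s : Bool) (i : Fin m) : cycWeight (a i) (b i) ((if s then 1 else -1) * (c i : ℤ)) =
      fun k ↦ (if s then 1 else -1) ^ k * cycWeight (a i) (b i) (c i) k := by
    ext k
    cases s <;> simp [cycWeight_neg]
  simp only [cycH_ofFn, h_sign]
  exact nestedSum_duplication
    (fun i j ↦ cycWeight_two_mul_add_one (a i) (b i) (Int.natCast_pos.mpr (hc i)) j) N

/-- Second duplication relation for cyclotomic harmonic sums:
the signed sum over all `2^(m+1)` sign choices `σ` of
`σ₁⋯σ_{m+1} · S_{(aᵢ,bᵢ,σᵢcᵢ)}(2n)` equals `2^(m+1) · S_{(2aᵢ,bᵢ−aᵢ,cᵢ)}(n)`. -/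
theorem cycH_duplication_second (m : ℕ) (a c b : Fin (m + 1) → ℕ) (n : ℕ)
    (ha : ∀ i, 0 < a i) (hc : ∀ i, 0 < c i) :
    ∑ σ : Fin (m + 1) → Bool,
        (∏ i, (if σ i then (1 : ℝ) else -1)) *
          cycH (List.ofFn fun i =>
            (a i, (b i : ℤ), (if σ i then 1 else -1) * (c i : ℤ))) (2 * n) =
      (2 : ℝ) ^ (m + 1) *
        cycH (List.ofFn fun i => (2 * a i, (b i : ℤ) - (a i : ℤ), (c i : ℤ))) n := by
  have h_half : (2 * n + 1) / 2 = n := by lia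
  simpa only [h_half] using cycH_duplication_second_general a c (fun i ↦ (b i : ℤ)) (2 * n)
    (fun i ↦ by have := ha i; lia) hc
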